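/- (Avalanche Principle) Let A₁, …, A_m be arbitrary 2×2 complex matrices with determinant 1. Suppose that min_{1≤j≤m} ‖A_j‖ ≥ μ ≥ m and max_{1≤j<m} [log‖A_{j+1}‖ + log‖A_j‖ − log‖A_{j+1}A_j‖] < (1/2) log μ. Then |log‖A_m ⋯ A₁‖ + Σ_{j=2}^{m−1} log‖A_j‖ − Σ_{j=1}^{m−1} log‖A_{j+1}A_j‖| < C_A · m/μ, where C_A is an absolute constant. -/

import Mathlib

open Matrix

noncomputable section

attribute [local instance] Matrix.linftyOpNormedAddCommGroup Matrix.linftyOpNormedRing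

/-- `prodDesc A n = A (n-1) * ⋯ * A 1 * A 0`. -/
def prodDesc (A : ℕ → Matrix (Fin 2) (Fin 2) ℂ) : ℕ → Matrix (Fin 2) (Fin 2) ℂ
  | 0 => 1
  | n + 1 => A n * prodDesc A n

/-!
For a `2 × 2` matrix `B` the tensors `(X * B) ⊗ (B * Y)` and `(X * B * Y) ⊗ B` differ by
`det B` times a tensor in the entries of `X` and `Y` alone, so that
`‖X * B * Y‖ * ‖B‖ = ‖X * B‖ * ‖B * Y‖ + O(‖X‖ * ‖Y‖)` when `‖det B‖ ≤ 1`. Take for `X`, `B` two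
consecutive factors and for `Y` the product of the earlier ones. If no multiplication loses more
than a factor `O(√μ)` in norm, then the error is `O(1 / μ)` relative to the main terms, and the
logarithms of these relations telescope to the theorem.

The loss is controlled inductively by the same relation, in which the error is really bounded by
the sum of the moduli of all entries of `Y`. In the row-sum norm this sum may be as large as
`2 * ‖Y‖`, and with that bound alone the induction breaks down already for `m = μ = 4`; following
the sum itself through the induction makes `m ≤ μ` sufficient for short products too.
-/

section RowSums

variable {ι κ α : Type*} [Fintype κ] [NormedAddCommGroup α]

/-- The `ℓ¹` norm of row `i`; the norm used on matrices is the maximum of these. -/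
def rowNorm (M : Matrix ι κ α) (i : ι) : ℝ := ∑ j, ‖M i j‖

lemma rowNorm_nonneg (M : Matrix ι κ α) (i : ι) : 0 ≤ rowNorm M i :=
  Finset.sum_nonneg fun _ _ => norm_nonneg _

variable [Fintype ι]

/-- The entrywise `ℓ¹` norm of a matrix, a second norm that measures the error terms. -/
def entrySum (M : Matrix ι κ α) : ℝ := ∑ i, rowNorm M i

lemma entrySum_nonneg (M : Matrix ι κ α) : 0 ≤ entrySum M :=
  Finset.sum_nonneg fun i _ => rowNorm_nonneg M i

lemma rowNorm_le_norm (M : Matrix ι κ α) (i : ι) : rowNorm M i ≤ ‖M‖ := by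
  have hle : ∑ j, ‖M i j‖₊ ≤ Finset.univ.sup fun i => ∑ j, ‖M i j‖₊ :=
    Finset.le_sup (f := fun i => ∑ j, ‖M i j‖₊) (Finset.mem_univ i)
  simpa [linfty_opNorm_def, rowNorm] using NNReal.coe_le_coe.2 hle

lemma exists_norm_eq_rowNorm [Nonempty ι] (M : Matrix ι κ α) : ∃ i, ‖M‖ = rowNorm M i := by
  obtain ⟨i, -, hi⟩ := Finset.exists_mem_eq_sup Finset.univ Finset.univ_nonempty
    fun i => ∑ j, ‖M i j‖₊
  exact ⟨i, by simp [linfty_opNorm_def, hi, rowNorm]⟩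

lemma norm_entry_le_norm (M : Matrix ι κ α) (i : ι) (j : κ) : ‖M i j‖ ≤ ‖M‖ :=
  (Finset.single_le_sum (fun j _ => norm_nonneg (M i j)) (Finset.mem_univ j)).trans
    (rowNorm_le_norm M i)

lemma norm_le_entrySum [Nonempty ι] (M : Matrix ι κ α) : ‖M‖ ≤ entrySum M := by
  obtain ⟨i, hi⟩ := exists_norm_eq_rowNorm M
  exact hi.trans_le (Finset.single_le_sum (fun i _ => rowNorm_nonneg M i) (Finset.mem_univ i))

lemma entrySum_le_card_mul_norm (M : Matrix ι κ α) : entrySum M ≤ Fintype.card ι * ‖M‖ := by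
  rw [← nsmul_eq_mul]
  exact Finset.sum_le_card_nsmul _ _ _ fun i _ => rowNorm_le_norm M i

end RowSums

lemma sum_fin_two_eq_add {M : Type*} [AddCommMonoid M] (f : Fin 2 → M) (k : Fin 2) :
    ∑ i, f i = f k + f (k + 1) := by
  fin_cases k <;> simp [Fin.sum_univ_two, add_comm]

lemma abs_log_sub_log_le {a b δ : ℝ} (ha : 0 < a) (hb : 0 < b) (hδa : |a - b| ≤ δ * a)
    (hδb : |a - b| ≤ δ * b) : |Real.log a - Real.log b| ≤ δ := by
  have log_sub_log_le {x y : ℝ} (hx : 0 < x) (hy : 0 < y) (h : x - y ≤ δ * y) :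
      Real.log x - Real.log y ≤ δ := by
    rw [← Real.log_div hx.ne' hy.ne']
    refine (Real.log_le_sub_one_of_pos (div_pos hx hy)).trans ?_
    rwa [div_sub_one hy.ne', div_le_iff₀ hy]
  exact abs_sub_le_iff.2 ⟨log_sub_log_le ha hb (abs_sub_le_iff.1 hδb).1,
    log_sub_log_le hb ha (abs_sub_le_iff.1 hδa).2⟩

lemma abs_log_add_log_sub_le {v K b x y p q t : ℝ} (hv : 0 < v) (hb : v ^ 2 ≤ b) (hx : 0 < x)
    (hy : 0 < y) (hp : 0 < p) (hq : 0 < q) (ht : 0 < t) (hxb : x * b ≤ K * v * p)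
    (hby : b * y ≤ K * v * q) (hxq : x * q ≤ K * v * t) (hdiff : |t * b - p * q| ≤ 2 * (x * y)) :
    |Real.log t + Real.log b - Real.log p - Real.log q| ≤ 2 * K ^ 2 / v ^ 2 := by
  have hb₀ : 0 < b := (sq_pos_of_pos hv).trans_le hb
  have hpair : x * y * v ^ 2 ≤ K ^ 2 * (p * q) := by
    refine le_of_mul_le_mul_right ?_ (sq_pos_of_pos hv)
    calc x * y * v ^ 2 * v ^ 2 ≤ x * y * b * b := by gcongr
      _ = (x * b) * (b * y) := by ring
      _ ≤ (K * v * p) * (K * v * q) :=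
        mul_le_mul hxb hby (by positivity) ((by positivity : 0 ≤ x * b).trans hxb)
      _ = K ^ 2 * (p * q) * v ^ 2 := by ring
  have htriple : x * y * v ^ 2 ≤ K ^ 2 * (t * b) := by
    refine le_of_mul_le_mul_right ?_ hq
    calc x * y * v ^ 2 * q ≤ x * y * b * q := by gcongr
      _ = (x * q) * (b * y) := by ring
      _ ≤ (K * v * t) * (K * v * q) :=
        mul_le_mul hxq hby (by positivity) ((by positivity : 0 ≤ x * q).trans hxq)
      _ = K ^ 2 * t * v ^ 2 * q := by ring
      _ ≤ K ^ 2 * t * b * q := by gcongr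
      _ = K ^ 2 * (t * b) * q := by ring
  have hrel {c : ℝ} (hc : x * y * v ^ 2 ≤ K ^ 2 * c) :
      |t * b - p * q| ≤ 2 * K ^ 2 / v ^ 2 * c := by
    refine hdiff.trans ?_
    rw [div_mul_eq_mul_div, le_div_iff₀ (by positivity)]
    linarith
  have hlog := abs_log_sub_log_le (mul_pos ht hb₀) (mul_pos hp hq) (hrel htriple) (hrel hpair)
  rwa [Real.log_mul ht.ne' hb₀.ne', Real.log_mul hp.ne' hq.ne', ← sub_sub] at hlog

lemma mul_le_sqrt_mul_of_log_add_log_sub_log_le {a b c μ : ℝ} (hμ : 1 < μ) (ha : μ ≤ a)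
    (hb : μ ≤ b) (hc : 0 ≤ c)
    (h : Real.log a + Real.log b - Real.log c ≤ 1 / 2 * Real.log μ) : a * b ≤ √μ * c := by
  have hμ₀ : 0 < μ := by linarith
  have ha₀ := hμ₀.trans_le ha
  have hb₀ := hμ₀.trans_le hb
  rcases hc.eq_or_lt with rfl | hc₀
  · have := Real.log_pos hμ
    have := Real.log_le_log hμ₀ ha
    have := Real.log_le_log hμ₀ hb
    rw [Real.log_zero] at h
    linarith
  · have hs : 0 < √μ := Real.sqrt_pos.2 hμ₀
    rw [← Real.log_le_log_iff (by positivity) (by positivity), Real.log_mul ha₀.ne' hb₀.ne',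
      Real.log_mul hs.ne' hc₀.ne', Real.log_sqrt hμ₀.le]
    linarith

section TwoByTwo

variable {𝕜 : Type*} [NormedField 𝕜] {X B Y : Matrix (Fin 2) (Fin 2) 𝕜}

lemma entrySum_le_two_mul_norm (M : Matrix (Fin 2) (Fin 2) 𝕜) : entrySum M ≤ 2 * ‖M‖ := by
  simpa using entrySum_le_card_mul_norm M

lemma mul_entry_mul_mul_entry_sub {R : Type*} [CommRing R] (X B Y : Matrix (Fin 2) (Fin 2) R)
    (i j k l : Fin 2) :
    (X * B) i j * (B * Y) k l - (X * (B * Y)) i l * B k j =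
      -(-1) ^ (k + j : ℕ) * B.det * (X i (k + 1) * Y (j + 1) l) := by
  rw [det_fin_two]
  fin_cases k <;> fin_cases j <;> simp [mul_apply, Fin.sum_univ_two] <;> ring

lemma norm_mul_entry_mul_mul_entry_sub (X B Y : Matrix (Fin 2) (Fin 2) 𝕜) (i j k l : Fin 2) :
    ‖(X * B) i j * (B * Y) k l - (X * (B * Y)) i l * B k j‖ =
      ‖B.det‖ * ‖X i (k + 1)‖ * ‖Y (j + 1) l‖ := by
  rw [mul_entry_mul_mul_entry_sub]
  simp [mul_assoc]

lemma abs_rowNorm_mul_rowNorm_sub_le (X B Y : Matrix (Fin 2) (Fin 2) 𝕜) (i k : Fin 2) :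
    |rowNorm (X * B) i * rowNorm (B * Y) k - rowNorm (X * (B * Y)) i * rowNorm B k| ≤
      ‖B.det‖ * ‖X i (k + 1)‖ * entrySum Y := by
  have expand : rowNorm (X * B) i * rowNorm (B * Y) k - rowNorm (X * (B * Y)) i * rowNorm B k =
      ∑ j, ∑ l, (‖(X * B) i j * (B * Y) k l‖ - ‖(X * (B * Y)) i l * B k j‖) := by
    simp only [Finset.sum_sub_distrib, norm_mul]
    rw [Finset.sum_comm (f := fun j l => ‖(X * (B * Y)) i l‖ * ‖B k j‖)]
    simp only [rowNorm, Finset.sum_mul_sum]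
  calc |rowNorm (X * B) i * rowNorm (B * Y) k - rowNorm (X * (B * Y)) i * rowNorm B k|
      ≤ ∑ j, ∑ l, ‖(X * B) i j * (B * Y) k l - (X * (B * Y)) i l * B k j‖ := by
        rw [expand]
        refine (Finset.abs_sum_le_sum_abs _ _).trans (Finset.sum_le_sum fun j _ => ?_)
        exact (Finset.abs_sum_le_sum_abs _ _).trans
          (Finset.sum_le_sum fun l _ => abs_norm_sub_norm_le _ _)
    _ = ‖B.det‖ * ‖X i (k + 1)‖ * ∑ j, rowNorm Y (j + 1) := by
        simp only [norm_mul_entry_mul_mul_entry_sub, rowNorm, Finset.mul_sum]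
    _ = ‖B.det‖ * ‖X i (k + 1)‖ * entrySum Y := by
        congr 1
        exact Equiv.sum_comp (Equiv.addRight (1 : Fin 2)) (rowNorm Y)

lemma norm_entry_mul_rowNorm_le (X W : Matrix (Fin 2) (Fin 2) 𝕜) (i k : Fin 2) :
    ‖X i (k + 1)‖ * rowNorm W (k + 1) ≤ rowNorm (X * W) i + ‖X i k‖ * rowNorm W k := by
  simp only [rowNorm, Finset.mul_sum, ← Finset.sum_add_distrib, ← norm_mul]
  gcongr with l
  have hl : X i (k + 1) * W (k + 1) l = (X * W) i l - X i k * W k l := by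
    rw [mul_apply, sum_fin_two_eq_add _ k, add_sub_cancel_left]
  rw [hl]
  exact norm_sub_le _ _

lemma norm_entry_mul_entrySum_le {W : Matrix (Fin 2) (Fin 2) 𝕜} {k : Fin 2}
    (hk : ‖W‖ = rowNorm W k) (X : Matrix (Fin 2) (Fin 2) 𝕜) (i : Fin 2) :
    ‖X i (k + 1)‖ * entrySum W ≤ ‖X * W‖ + ‖X‖ * ‖W‖ := by
  have hX : ‖X i k‖ + ‖X i (k + 1)‖ ≤ ‖X‖ :=
    (sum_fin_two_eq_add (fun j => ‖X i j‖) k).symm.trans_le (rowNorm_le_norm X i)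
  calc ‖X i (k + 1)‖ * entrySum W
      = ‖X i (k + 1)‖ * rowNorm W (k + 1) + ‖X i (k + 1)‖ * ‖W‖ := by
        rw [entrySum, sum_fin_two_eq_add _ k, hk]; ring
    _ ≤ rowNorm (X * W) i + ‖X i k‖ * ‖W‖ + ‖X i (k + 1)‖ * ‖W‖ := by
        rw [hk]; gcongr; exact norm_entry_mul_rowNorm_le X W i k
    _ = rowNorm (X * W) i + (‖X i k‖ + ‖X i (k + 1)‖) * ‖W‖ := by ring
    _ ≤ ‖X * W‖ + ‖X‖ * ‖W‖ := by gcongr; exact rowNorm_le_norm _ _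

-- Both bounds hold for the same `ξ`: if `entrySum (B * Y)` is close to `2 * ‖B * Y‖`, then the
-- second one brings `ξ` down to about `‖X‖ / 2`, which improves the error term in the first.
lemma exists_norm_mul_mul_norm_mul_le (X B Y : Matrix (Fin 2) (Fin 2) 𝕜) :
    ∃ ξ : ℝ, 0 ≤ ξ ∧ ξ ≤ ‖X‖ ∧
      ‖X * B‖ * ‖B * Y‖ ≤ ‖X * (B * Y)‖ * ‖B‖ + ‖B.det‖ * ξ * entrySum Y ∧
      ξ * entrySum (B * Y) ≤ ‖X * (B * Y)‖ + ‖X‖ * ‖B * Y‖ := by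
  obtain ⟨i, hi⟩ := exists_norm_eq_rowNorm (X * B)
  obtain ⟨k, hk⟩ := exists_norm_eq_rowNorm (B * Y)
  refine ⟨‖X i (k + 1)‖, norm_nonneg _, norm_entry_le_norm X i (k + 1), ?_,
    norm_entry_mul_entrySum_le hk X i⟩
  have hrows : rowNorm (X * (B * Y)) i * rowNorm B k ≤ ‖X * (B * Y)‖ * ‖B‖ :=
    mul_le_mul (rowNorm_le_norm _ i) (rowNorm_le_norm _ k) (rowNorm_nonneg _ _) (norm_nonneg _)
  rw [hi, hk]
  linarith [(abs_le.1 (abs_rowNorm_mul_rowNorm_sub_le X B Y i k)).2]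

lemma abs_norm_mul_norm_sub_le (X B Y : Matrix (Fin 2) (Fin 2) 𝕜) :
    |‖X * (B * Y)‖ * ‖B‖ - ‖X * B‖ * ‖B * Y‖| ≤ 2 * (‖B.det‖ * ‖X‖ * ‖Y‖) := by
  have error_le {ξ : ℝ} (hξ : ξ ≤ ‖X‖) :
      ‖B.det‖ * ξ * entrySum Y ≤ 2 * (‖B.det‖ * ‖X‖ * ‖Y‖) := by
    calc ‖B.det‖ * ξ * entrySum Y ≤ ‖B.det‖ * ‖X‖ * (2 * ‖Y‖) := by
          gcongr
          exacts [entrySum_nonneg Y, entrySum_le_two_mul_norm Y]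
      _ = 2 * (‖B.det‖ * ‖X‖ * ‖Y‖) := by ring
  rw [abs_sub_le_iff]
  constructor
  · obtain ⟨i, hi⟩ := exists_norm_eq_rowNorm (X * (B * Y))
    obtain ⟨k, hk⟩ := exists_norm_eq_rowNorm B
    have hrows : rowNorm (X * B) i * rowNorm (B * Y) k ≤ ‖X * B‖ * ‖B * Y‖ :=
      mul_le_mul (rowNorm_le_norm _ i) (rowNorm_le_norm _ k) (rowNorm_nonneg _ _) (norm_nonneg _)
    rw [hi, hk]
    linarith [(abs_le.1 (abs_rowNorm_mul_rowNorm_sub_le X B Y i k)).1,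
      error_le (norm_entry_le_norm X i (k + 1))]
  · obtain ⟨ξ, -, hξ, hle, -⟩ := exists_norm_mul_mul_norm_mul_le X B Y
    linarith [error_le hξ]

section Growth

variable {v E : ℝ}

lemma exists_norm_mul_norm_mul_le_of_gap (hB : B ≠ 0) (hdet : ‖B.det‖ ≤ 1) (hv : 0 ≤ v)
    (hgap : ‖X‖ * ‖B‖ ≤ v * ‖X * B‖) (hY : v * entrySum Y ≤ E * ‖B‖ * ‖B * Y‖) :
    ∃ ξ : ℝ, 0 ≤ ξ ∧ ξ ≤ ‖X‖ ∧
      ‖X‖ * ‖B * Y‖ ≤ v * ‖X * (B * Y)‖ + ξ * E * ‖B * Y‖ ∧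
      ξ * entrySum (B * Y) ≤ ‖X * (B * Y)‖ + ‖X‖ * ‖B * Y‖ := by
  obtain ⟨ξ, hξ, hξX, htriple, hentry⟩ := exists_norm_mul_mul_norm_mul_le X B Y
  refine ⟨ξ, hξ, hξX, le_of_mul_le_mul_right ?_ (norm_pos_iff.2 hB), hentry⟩
  have hYnn := entrySum_nonneg Y
  calc ‖X‖ * ‖B * Y‖ * ‖B‖ = ‖X‖ * ‖B‖ * ‖B * Y‖ := by ring
    _ ≤ v * ‖X * B‖ * ‖B * Y‖ := by gcongr
    _ = v * (‖X * B‖ * ‖B * Y‖) := by ring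
    _ ≤ v * (‖X * (B * Y)‖ * ‖B‖ + 1 * ξ * entrySum Y) := by
      gcongr; exact htriple.trans (by gcongr)
    _ = v * ‖X * (B * Y)‖ * ‖B‖ + ξ * (v * entrySum Y) := by ring
    _ ≤ v * ‖X * (B * Y)‖ * ‖B‖ + ξ * (E * ‖B‖ * ‖B * Y‖) := by gcongr
    _ = (v * ‖X * (B * Y)‖ + ξ * E * ‖B * Y‖) * ‖B‖ := by ring

lemma one_sub_mul_norm_mul_norm_mul_le (hB : B ≠ 0) (hdet : ‖B.det‖ ≤ 1) (hv : 0 ≤ v)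
    (hE : 0 ≤ E) (hgap : ‖X‖ * ‖B‖ ≤ v * ‖X * B‖)
    (hY : v * entrySum Y ≤ E * ‖B‖ * ‖B * Y‖) :
    (1 - E) * (‖X‖ * ‖B * Y‖) ≤ v * ‖X * (B * Y)‖ := by
  obtain ⟨ξ, -, hξX, hgrowth, -⟩ := exists_norm_mul_norm_mul_le_of_gap hB hdet hv hgap hY
  have herror : ξ * E * ‖B * Y‖ ≤ ‖X‖ * E * ‖B * Y‖ := by gcongr
  linarith

lemma norm_mul_entrySum_mul_le {Q : ℝ} (hB : B ≠ 0) (hdet : ‖B.det‖ ≤ 1) (hv : 2 ≤ v)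
    (hE : 0 ≤ E) (hgap : ‖X‖ * ‖B‖ ≤ v * ‖X * B‖) (hY : v * entrySum Y ≤ E * ‖B‖ * ‖B * Y‖)
    (hQ₀ : 0 ≤ Q)
    (hQ : ∀ p s : ℝ, p ≤ s → s ≤ 2 * p → s * (s + E / 2 * p) ≤ Q * (s - E * p) * p) :
    ‖X‖ * entrySum (B * Y) ≤ Q * v * ‖X * (B * Y)‖ := by
  obtain ⟨ξ, _, _, hgrowth, hentry⟩ :=
    exists_norm_mul_norm_mul_le_of_gap hB hdet (by linarith) hgap hY
  have hps := norm_le_entrySum (B * Y)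
  have hsp := entrySum_le_two_mul_norm (B * Y)
  rcases eq_or_ne (B * Y) 0 with hBY | hBY
  · simp [hBY, entrySum, rowNorm]
  have hp : 0 < ‖B * Y‖ := norm_pos_iff.2 hBY
  set p := ‖B * Y‖
  set s := entrySum (B * Y)
  set t := ‖X * (B * Y)‖
  have hs : 0 < s := hp.trans_le hps
  have hgrowth' : ‖X‖ * p * (s - E * p) ≤ v * t * (s + E / 2 * p) := by
    have : ‖X‖ * p * s ≤ v * t * s + E * p * (t + ‖X‖ * p) :=
      calc ‖X‖ * p * s ≤ (v * t + ξ * E * p) * s := by gcongr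
        _ = v * t * s + E * p * (ξ * s) := by ring
        _ ≤ v * t * s + E * p * (t + ‖X‖ * p) := by gcongr
    have : 2 * (E / 2 * p * t) ≤ v * (E / 2 * p * t) := by gcongr
    linarith
  refine le_of_mul_le_mul_right ?_ (show 0 < s + E / 2 * p by positivity)
  calc ‖X‖ * s * (s + E / 2 * p) = ‖X‖ * (s * (s + E / 2 * p)) := by ring
    _ ≤ ‖X‖ * (Q * (s - E * p) * p) := by gcongr ‖X‖ * ?_; exact hQ p s hps hsp
    _ = Q * (‖X‖ * p * (s - E * p)) := by ring
    _ ≤ Q * (v * t * (s + E / 2 * p)) := by gcongr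
    _ = Q * v * t * (s + E / 2 * p) := by ring

lemma mul_entrySum_le_of_sq_le_norm {X Z : Matrix (Fin 2) (Fin 2) 𝕜} {Q : ℝ} (hv : 0 < v)
    (hE : 0 ≤ E) (hX : v ^ 2 ≤ ‖X‖) (hQE : Q ≤ E * v ^ 2)
    (hY : ‖X‖ * entrySum Y ≤ Q * v * ‖Z‖) :
    v * entrySum Y ≤ E * ‖X‖ * ‖Z‖ := by
  refine le_of_mul_le_mul_right ?_ ((sq_pos_of_pos hv).trans_le hX)
  calc v * entrySum Y * ‖X‖ = v * (‖X‖ * entrySum Y) := by ring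
    _ ≤ v * (E * v ^ 2 * v * ‖Z‖) := by gcongr v * ?_; exact hY.trans (by gcongr)
    _ = E * v ^ 2 * ‖Z‖ * v ^ 2 := by ring
    _ ≤ E * ‖X‖ * ‖Z‖ * ‖X‖ := by gcongr

end Growth

lemma abs_log_norm_mul_mul_le {v K : ℝ} (hX : X ≠ 0) (hY : Y ≠ 0) (hdet : ‖B.det‖ ≤ 1)
    (hv : 0 < v) (hK : 0 < K) (hB : v ^ 2 ≤ ‖B‖) (hXB : ‖X‖ * ‖B‖ ≤ K * v * ‖X * B‖)
    (hBY : ‖B‖ * ‖Y‖ ≤ K * v * ‖B * Y‖) (hXBY : ‖X‖ * ‖B * Y‖ ≤ K * v * ‖X * (B * Y)‖) :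
    |Real.log ‖X * (B * Y)‖ + Real.log ‖B‖ - Real.log ‖X * B‖ - Real.log ‖B * Y‖| ≤
      2 * K ^ 2 / v ^ 2 := by
  have hx : 0 < ‖X‖ := norm_pos_iff.2 hX
  have hy : 0 < ‖Y‖ := norm_pos_iff.2 hY
  have hb : 0 < ‖B‖ := (sq_pos_of_pos hv).trans_le hB
  have hKv : 0 ≤ K * v := by positivity
  have hby : 0 < ‖B * Y‖ := pos_of_mul_pos_right ((mul_pos hb hy).trans_le hBY) hKv
  refine abs_log_add_log_sub_le hv hB hx hy
    (pos_of_mul_pos_right ((mul_pos hx hb).trans_le hXB) hKv) hby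
    (pos_of_mul_pos_right ((mul_pos hx hby).trans_le hXBY) hKv) hXB hBY hXBY
    ((abs_norm_mul_norm_sub_le X B Y).trans ?_)
  gcongr
  exact mul_le_of_le_one_left hx.le hdet

end TwoByTwo

/-- The product `A (n-1) * ⋯ * A 1 * A 0` in any monoid, of which `prodDesc` is the case of
complex `2 × 2` matrices. -/
def descProd {M : Type*} [Monoid M] (A : ℕ → M) : ℕ → M
  | 0 => 1
  | n + 1 => A n * descProd A n

lemma prodDesc_eq_descProd (A : ℕ → Matrix (Fin 2) (Fin 2) ℂ) (n : ℕ) :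
    prodDesc A n = descProd A n := by
  induction n with
  | zero => rfl
  | succ n ih => rw [prodDesc, descProd, ih]

/-- The hypotheses of the avalanche principle on the matrices `A 0, …, A (m-1)`, with `μ = v ^ 2`
and with the condition on consecutive products freed of logarithms. -/
structure AvalancheCondition {𝕜 : Type*} [NormedField 𝕜] (A : ℕ → Matrix (Fin 2) (Fin 2) 𝕜)
    (m : ℕ) (v : ℝ) : Prop where
  pos : 0 < v
  norm_det_le_one : ∀ j < m, ‖(A j).det‖ ≤ 1
  sq_le_norm : ∀ j < m, v ^ 2 ≤ ‖A j‖
  card_le_sq : (m : ℝ) ≤ v ^ 2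
  norm_mul_norm_le : ∀ j, j + 1 < m → ‖A (j + 1)‖ * ‖A j‖ ≤ v * ‖A (j + 1) * A j‖

namespace AvalancheCondition

variable {𝕜 : Type*} [NormedField 𝕜] {A : ℕ → Matrix (Fin 2) (Fin 2) 𝕜} {m n : ℕ} {v : ℝ}

lemma ne_zero (h : AvalancheCondition A m v) {j : ℕ} (hj : j < m) : A j ≠ 0 :=
  norm_pos_iff.1 ((sq_pos_of_pos h.pos).trans_le (h.sq_le_norm j hj))

lemma cast_add_le_sq (h : AvalancheCondition A m v) {k : ℕ} (hn : n + k ≤ m) :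
    (n : ℝ) + k ≤ v ^ 2 :=
  le_trans (by exact_mod_cast hn) h.card_le_sq

-- Where the induction goes on, `v ^ 2 ≥ n + 4` is at least `2` times the constant for `n = 0`
-- and at least `3 / 2` times the constant for all `n`; these ratios give the next constants `3`
-- and `4`.
lemma norm_mul_entrySum_descProd_le (h : AvalancheCondition A m v) (hn : n + 3 ≤ m) :
    ‖A (n + 1)‖ * entrySum (descProd A (n + 1)) ≤
      min ((n : ℝ) + 2) 4 * v * ‖descProd A (n + 2)‖ := by
  induction n with
  | zero =>
    have hgap := h.norm_mul_norm_le 0 (by omega)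
    have hsum := mul_le_mul_of_nonneg_left (entrySum_le_two_mul_norm (A 0)) (norm_nonneg (A 1))
    simp only [descProd, mul_one, zero_add] at hgap ⊢
    rw [show min (((0 : ℕ) : ℝ) + 2) 4 = 2 by norm_num]
    linarith
  | succ n ih =>
    have hμ : (n : ℝ) + 4 ≤ v ^ 2 := h.cast_add_le_sq (k := 4) (by omega)
    have hv : 2 ≤ v := (sq_le_sq₀ zero_le_two h.pos.le).1 (by linarith [n.cast_nonneg (α := ℝ)])
    have step {E Q : ℝ} (hE : 0 ≤ E) (hμE : min ((n : ℝ) + 2) 4 ≤ E * v ^ 2) :=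
      norm_mul_entrySum_mul_le (Q := Q) (h.ne_zero (j := n + 1) (by omega))
        (h.norm_det_le_one (n + 1) (by omega)) hv hE (h.norm_mul_norm_le (n + 1) (by omega))
        (mul_entrySum_le_of_sq_le_norm h.pos hE (h.sq_le_norm (n + 1) (by omega)) hμE
          (ih (by omega)))
    rcases n with _ | n
    · rw [show min (((0 + 1 : ℕ) : ℝ) + 2) 4 = 3 by norm_num]
      refine step (E := 1 / 2) (by norm_num) (by norm_num at hμ ⊢; linarith) (by norm_num)
        fun p s hps hsp => ?_
      linarith [mul_nonneg (sub_nonneg.2 hsp) (show 0 ≤ s - 3 / 4 * p by linarith)]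
    · have hmin : min (((n + 1 + 1 : ℕ) : ℝ) + 2) 4 = 4 :=
        min_eq_right (by push_cast; linarith [n.cast_nonneg (α := ℝ)])
      rw [hmin]
      refine step (E := 2 / 3) (by norm_num) ?_ (by norm_num) fun p s hps hsp => ?_
      · linarith [min_le_left (((n + 1 : ℕ) : ℝ) + 2) 4, min_le_right (((n + 1 : ℕ) : ℝ) + 2) 4]
      · linarith [mul_nonneg (sub_nonneg.2 hps) (show 0 ≤ 8 / 3 * p - s by linarith)]

lemma norm_mul_norm_descProd_le (h : AvalancheCondition A m v) (hn : n + 2 ≤ m) :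
    ‖A (n + 1)‖ * ‖descProd A (n + 1)‖ ≤ 5 * v * ‖descProd A (n + 2)‖ := by
  rcases n with _ | n
  · have hgap := h.norm_mul_norm_le 0 (by omega)
    have hnonneg : 0 ≤ v * ‖A 1 * A 0‖ := mul_nonneg h.pos.le (norm_nonneg _)
    simp only [descProd, mul_one, zero_add] at hgap ⊢
    linarith
  · have hμ : (n : ℝ) + 3 ≤ v ^ 2 := h.cast_add_le_sq (k := 3) (by omega)
    have hE : min ((n : ℝ) + 2) 4 ≤ 4 / 5 * v ^ 2 := by
      linarith [min_le_left ((n : ℝ) + 2) 4, min_le_right ((n : ℝ) + 2) 4]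
    have hgrowth := one_sub_mul_norm_mul_norm_mul_le (h.ne_zero (j := n + 1) (by omega))
      (h.norm_det_le_one (n + 1) (by omega)) h.pos.le (by norm_num)
      (h.norm_mul_norm_le (n + 1) (by omega))
      (mul_entrySum_le_of_sq_le_norm h.pos (by norm_num) (h.sq_le_norm (n + 1) (by omega)) hE
        (h.norm_mul_entrySum_descProd_le (by omega)))
    change ‖A (n + 2)‖ * ‖A (n + 1) * descProd A (n + 1)‖ ≤
      5 * v * ‖A (n + 2) * (A (n + 1) * descProd A (n + 1))‖
    linarith

lemma descProd_succ_ne_zero (h : AvalancheCondition A m v) (hn : n + 1 ≤ m) :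
    descProd A (n + 1) ≠ 0 := by
  induction n with
  | zero => simpa [descProd] using h.ne_zero (j := 0) (by omega)
  | succ n ih =>
    have hpos : 0 < ‖A (n + 1)‖ * ‖descProd A (n + 1)‖ :=
      mul_pos (norm_pos_iff.2 (h.ne_zero (by omega))) (norm_pos_iff.2 (ih (by omega)))
    exact norm_pos_iff.1 (pos_of_mul_pos_right
      (hpos.trans_le (h.norm_mul_norm_descProd_le hn)) (mul_pos (by norm_num) h.pos).le)

lemma abs_log_norm_descProd_add_three_le (h : AvalancheCondition A m v) (hn : n + 3 ≤ m) :
    |Real.log ‖descProd A (n + 3)‖ + Real.log ‖A (n + 1)‖ - Real.log ‖A (n + 2) * A (n + 1)‖ -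
        Real.log ‖descProd A (n + 2)‖| ≤ 50 / v ^ 2 := by
  have hgap : ‖A (n + 2)‖ * ‖A (n + 1)‖ ≤ 5 * v * ‖A (n + 2) * A (n + 1)‖ := by
    have hnonneg : 0 ≤ v * ‖A (n + 2) * A (n + 1)‖ := mul_nonneg h.pos.le (norm_nonneg _)
    linarith [h.norm_mul_norm_le (n + 1) hn]
  have htriple := abs_log_norm_mul_mul_le (h.ne_zero hn)
    (h.descProd_succ_ne_zero (n := n) (by omega)) (h.norm_det_le_one (n + 1) (by omega)) h.pos
    (by norm_num) (h.sq_le_norm (n + 1) (by omega)) hgap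
    (h.norm_mul_norm_descProd_le (n := n) (by omega)) (h.norm_mul_norm_descProd_le hn)
  exact htriple.trans_eq (by norm_num)

lemma abs_log_norm_descProd_le (h : AvalancheCondition A m v) (hn : n + 2 ≤ m) :
    |Real.log ‖descProd A (n + 2)‖ + (∑ j ∈ Finset.Ico 1 (n + 1), Real.log ‖A j‖) -
        ∑ j ∈ Finset.range (n + 1), Real.log ‖A (j + 1) * A j‖| ≤ n * (50 / v ^ 2) := by
  induction n with
  | zero => simp [descProd]
  | succ n ih =>
    obtain ⟨ih_lower, ih_upper⟩ := abs_le.1 (ih (by omega))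
    obtain ⟨step_lower, step_upper⟩ := abs_le.1 (h.abs_log_norm_descProd_add_three_le hn)
    rw [Finset.sum_Ico_succ_top (by omega), Finset.sum_range_succ]
    push_cast
    exact abs_le.2 ⟨by linarith, by linarith⟩

end AvalancheCondition

theorem avalanche_principle_general {𝕜 : Type*} [NormedField 𝕜] {m : ℕ}
    {A : ℕ → Matrix (Fin 2) (Fin 2) 𝕜} {μ : ℝ} (hm : 2 ≤ m) (hdet : ∀ j < m, ‖(A j).det‖ ≤ 1)
    (hA : ∀ j < m, μ ≤ ‖A j‖) (hmμ : (m : ℝ) ≤ μ)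
    (hgap : ∀ j, j + 1 < m →
      Real.log ‖A (j + 1)‖ + Real.log ‖A j‖ - Real.log ‖A (j + 1) * A j‖ ≤
        (1 / 2) * Real.log μ) :
    |Real.log ‖descProd A m‖ + (∑ j ∈ Finset.Ico 1 (m - 1), Real.log ‖A j‖) -
        ∑ j ∈ Finset.range (m - 1), Real.log ‖A (j + 1) * A j‖| < 50 * (m : ℝ) / μ := by
  have hμ : 1 < μ := lt_of_lt_of_le (by exact_mod_cast hm) hmμ
  have hμ₀ : 0 < μ := by linarith
  have hsq : √μ ^ 2 = μ := Real.sq_sqrt hμ₀.le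
  have hcond : AvalancheCondition A m √μ :=
    { pos := Real.sqrt_pos.2 hμ₀
      norm_det_le_one := hdet
      sq_le_norm := by rwa [hsq]
      card_le_sq := by rwa [hsq]
      norm_mul_norm_le := fun j hj => mul_le_sqrt_mul_of_log_add_log_sub_log_le hμ
        (hA (j + 1) hj) (hA j (by omega)) (norm_nonneg _) (hgap j hj) }
  obtain ⟨n, rfl⟩ := Nat.exists_eq_add_of_le' hm
  have hle := hcond.abs_log_norm_descProd_le le_rfl
  rw [hsq] at hle
  refine hle.trans_lt ?_
  rw [← mul_div_assoc, div_lt_div_iff_of_pos_right hμ₀]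
  push_cast
  linarith

/-- **Avalanche Principle** (Goldstein–Schlag).  With matrices indexed `A 0, …, A (m-1)`
(corresponding to `A₁, …, A_m`): if every `‖A j‖ ≥ μ ≥ m` and consecutive products do not
lose more than `(1/2) log μ`, then
`|log‖A_m ⋯ A₁‖ + Σ_{j=2}^{m−1} log‖A_j‖ − Σ_{j=1}^{m−1} log‖A_{j+1}A_j‖| < C_A · m/μ`
for an absolute constant `C_A`. -/
theorem avalanche_principle :
    ∃ C_A : ℝ, 0 < C_A ∧
      ∀ (m : ℕ) (A : ℕ → Matrix (Fin 2) (Fin 2) ℂ) (μ : ℝ),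
        2 ≤ m →
        (∀ j < m, (A j).det = 1) →
        (∀ j < m, μ ≤ ‖A j‖) →
        (m : ℝ) ≤ μ →
        (∀ j, j + 1 < m →
          Real.log ‖A (j + 1)‖ + Real.log ‖A j‖ - Real.log ‖A (j + 1) * A j‖ <
            (1 / 2) * Real.log μ) →
        |Real.log ‖prodDesc A m‖ + (∑ j ∈ Finset.Ico 1 (m - 1), Real.log ‖A j‖) -
            ∑ j ∈ Finset.range (m - 1), Real.log ‖A (j + 1) * A j‖| <
          C_A * (m : ℝ) / μ := by
  refine ⟨50, by norm_num, fun m A μ hm hdet hA hmμ hgap => ?_⟩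
  simpa only [prodDesc_eq_descProd] using avalanche_principle_general hm
    (fun j hj => by simp [hdet j hj]) hA hmμ fun j hj => (hgap j hj).le

end
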